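/- Let n ≥ 1, let ρ be a convolution kernel on ℝⁿ as in the context, let A' ⊆ ℝⁿ be open and bounded, and for each j ∈ ℕ let g_j : ℝⁿ → [0,∞) be integrable, vanishing outside A', with the family (g_j) equi-integrable. Let (δ_j) be positive reals with δ_j → 0, and let A ⊆ ℝⁿ be open with compact closure contained in A'. Then liminf_{j→∞} ∫_A (g_j * ρ_{δ_j})(x) dx ≥ liminf_{j→∞} ∫_A g_j(x) dx. -/

import Mathlib

open MeasureTheory Filter Topology

/-- The rescaled mollification `(g * ρ_δ)(x) = ∫ g(y) δ^{-n} ρ((x-y)/δ) dy`. -/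
noncomputable def mollify (n : ℕ) (ρ : (Fin n → ℝ) → ℝ) (δ : ℝ)
    (g : (Fin n → ℝ) → ℝ) (x : Fin n → ℝ) : ℝ :=
  ∫ y, g y * ((δ ^ n)⁻¹ * ρ (δ⁻¹ • (x - y)))

lemma aux_kernel (n : ℕ) (ρ : (Fin n → ℝ) → ℝ) (hρ : Integrable ρ) (hρ_int : ∫ x, ρ x = 1)
    (δ : ℝ) (hδ : 0 < δ) :
    Integrable (fun x => (δ ^ n)⁻¹ * ρ (δ⁻¹ • x)) ∧
      ∫ x, (δ ^ n)⁻¹ * ρ (δ⁻¹ • x) = 1 := by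
  refine ⟨(hρ.comp_smul (inv_ne_zero hδ.ne')).const_mul _, ?_⟩
  rw [integral_const_mul, Measure.integral_comp_smul, hρ_int]
  have : 0 < δ ^ n := by positivity
  simp [abs_of_pos this, this.ne']

lemma aux_bounds (n : ℕ) (K g : (Fin n → ℝ) → ℝ) (hK0 : ∀ x, 0 ≤ K x) (hK : Integrable K)
    (hK1 : ∫ x, K x = 1) (hg0 : ∀ x, 0 ≤ g x) (hg : Integrable g)
    (A E : Set (Fin n → ℝ)) (hA : MeasurableSet A) (hE : MeasurableSet E)
    (hAE : ∀ y ∈ A \ E, ∀ x ∉ A, K (x - y) = 0) :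
    0 ≤ ∫ x in A, ∫ y, g y * K (x - y) ∧
    ∫ x in A, ∫ y, g y * K (x - y) ≤ ∫ y, g y ∧
    ∫ y in A, g y ≤ (∫ x in A, ∫ y, g y * K (x - y)) + ∫ y in E, g y := by
  have hF : Integrable (fun p : (Fin n → ℝ) × (Fin n → ℝ) => g p.2 * K (p.1 - p.2))
      (volume.prod volume) := hg.convolution_integrand (ContinuousLinearMap.mul ℝ ℝ) hK
  have hFA : Integrable (fun p : (Fin n → ℝ) × (Fin n → ℝ) => g p.2 * K (p.1 - p.2))
      ((volume.restrict A).prod volume) := by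
    have := hF.mono_measure (Measure.restrict_le_self (s := A ×ˢ Set.univ))
    rwa [← Measure.prod_restrict, Measure.restrict_univ] at this
  have hone : ∀ y, ∫ x, g y * K (x - y) = g y := fun y => by
    rw [integral_const_mul, integral_sub_right_eq_self K y, hK1, mul_one]
  have hnn : ∀ x y, 0 ≤ g y * K (x - y) := fun x y => mul_nonneg (hg0 _) (hK0 _)
  refine ⟨integral_nonneg fun x => integral_nonneg fun y => hnn x y, ?_, ?_⟩
  · calc _ ≤ ∫ x, ∫ y, g y * K (x - y) :=
          setIntegral_le_integral hF.integral_prod_left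
            (Eventually.of_forall fun x => integral_nonneg fun y => hnn x y)
      _ = ∫ y, ∫ x, g y * K (x - y) := integral_integral_swap hF
      _ = ∫ y, g y := by simp only [hone]
  · have h1 : ∫ x in A, ∫ y, g y * K (x - y) = ∫ y, ∫ x in A, g y * K (x - y) :=
      integral_integral_swap hFA
    have h2 : ∫ y in A \ E, g y = ∫ y in A \ E, ∫ x in A, g y * K (x - y) := by
      refine setIntegral_congr_fun (hA.diff hE) fun y hy => ?_
      rw [setIntegral_eq_integral_of_forall_compl_eq_zero, hone]
      intro x hx
      rw [hAE y hy x hx, mul_zero]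
    have h3 : ∫ y in A \ E, ∫ x in A, g y * K (x - y) ≤ ∫ y, ∫ x in A, g y * K (x - y) :=
      setIntegral_le_integral hFA.integral_prod_right
        (Eventually.of_forall fun y => integral_nonneg fun x => hnn x y)
    have h4 : ∫ y in A ∩ E, g y ≤ ∫ y in E, g y :=
      setIntegral_mono_set hg.integrableOn (Eventually.of_forall fun y => hg0 y)
        (Eventually.of_forall Set.inter_subset_right)
    have h5 := integral_inter_add_sdiff hE (hg.integrableOn (s := A))
    linarith

lemma aux_unif (n : ℕ) (hn : 1 ≤ n) (A' : Set (Fin n → ℝ)) (hA'_bdd : Bornology.IsBounded A')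
    (g : ℕ → (Fin n → ℝ) → ℝ)
    (hg_nonneg : ∀ j x, 0 ≤ g j x)
    (hg_int : ∀ j, Integrable (g j))
    (hg_supp : ∀ j, ∀ x ∉ A', g j x = 0)
    (hg_equi : ∀ ε > (0:ℝ), ∃ η > (0:ℝ), ∀ j, ∀ E : Set (Fin n → ℝ),
      MeasurableSet E → volume E ≤ ENNReal.ofReal η → ∫ x in E, g j x ≤ ε) :
    ∃ C : ℝ, ∀ j, ∫ x, g j x ≤ C := by
  obtain ⟨η, hη, h⟩ := hg_equi 1 one_pos
  obtain ⟨r, hr, hrη⟩ : ∃ r : ℝ, 0 < r ∧ (2 * r) ^ n ≤ η := by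
    have : Tendsto (fun r : ℝ => (2 * r) ^ n) (𝓝[>] 0) (𝓝 0) := by
      have hc : Continuous (fun r : ℝ => (2 * r) ^ n) := by fun_prop
      have := hc.tendsto 0
      simp only [mul_zero, zero_pow (by omega : n ≠ 0)] at this
      exact this.mono_left nhdsWithin_le_nhds
    obtain ⟨r, h1, h2⟩ := ((this.eventually_lt_const hη).and self_mem_nhdsWithin).exists
    exact ⟨r, h2, h1.le⟩
  obtain ⟨t, htf, ht⟩ := Metric.totallyBounded_iff.1 (hA'_bdd.isCompact_closure.totallyBounded.subset subset_closure) r hr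
  lift t to Finset (Fin n → ℝ) using htf
  refine ⟨t.card, fun j => ?_⟩
  have key : ∀ s : Finset (Fin n → ℝ), ∫ x in ⋃ y ∈ s, Metric.ball y r, g j x ≤ s.card := by
    classical
    intro s
    induction s using Finset.induction_on with
    | empty => simp
    | insert a s ha ih =>
      rw [Finset.set_biUnion_insert, Finset.card_insert_of_notMem ha]
      have hb := h j (Metric.ball a r) measurableSet_ball (by
        rw [Real.volume_pi_ball a hr, Fintype.card_fin]
        exact ENNReal.ofReal_le_ofReal hrη)
      set U := ⋃ y ∈ s, Metric.ball y r
      have h1 := setIntegral_union (μ := volume) (f := g j) (s := Metric.ball a r \ U) (t := U)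
        Set.disjoint_sdiff_left (by
          exact Finset.measurableSet_biUnion _ fun _ _ => measurableSet_ball)
        (hg_int j).integrableOn (hg_int j).integrableOn
      rw [Set.diff_union_self] at h1
      have h2 : ∫ y in Metric.ball a r \ U, g j y ≤ ∫ y in Metric.ball a r, g j y :=
        setIntegral_mono_set (hg_int j).integrableOn (Eventually.of_forall fun y => hg_nonneg j y)
          (Eventually.of_forall Set.diff_subset)
      push_cast
      linarith
  have := key t
  rwa [setIntegral_eq_integral_of_forall_compl_eq_zero] at this
  intro x hx
  exact hg_supp j x fun hxA => hx (ht hxA)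

theorem statement1
    (n : ℕ) (hn : 1 ≤ n)
    (ρ : (Fin n → ℝ) → ℝ)
    (hρ_nonneg : ∀ x, 0 ≤ ρ x)
    (hρ_bdd : ∃ C : ℝ, ∀ x, ρ x ≤ C)
    (hρ_lsc : LowerSemicontinuous ρ)
    (hρ_supp : HasCompactSupport ρ)
    (hρ_int : ∫ x, ρ x = 1)
    (A' : Set (Fin n → ℝ)) (hA'_open : IsOpen A') (hA'_bdd : Bornology.IsBounded A')
    (g : ℕ → (Fin n → ℝ) → ℝ)
    (hg_nonneg : ∀ j x, 0 ≤ g j x)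
    (hg_int : ∀ j, Integrable (g j))
    (hg_supp : ∀ j, ∀ x ∉ A', g j x = 0)
    (hg_equi : ∀ ε > (0:ℝ), ∃ η > (0:ℝ), ∀ j, ∀ E : Set (Fin n → ℝ),
      MeasurableSet E → volume E ≤ ENNReal.ofReal η → ∫ x in E, g j x ≤ ε)
    (δ : ℕ → ℝ) (hδ_pos : ∀ j, 0 < δ j)
    (hδ_lim : Tendsto δ atTop (𝓝 0))
    (A : Set (Fin n → ℝ)) (hA_open : IsOpen A)
    (hA_cpt : IsCompact (closure A)) (hA_sub : closure A ⊆ A') :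
    liminf (fun j => ∫ x in A, g j x) atTop ≤
      liminf (fun j => ∫ x in A, mollify n ρ (δ j) (g j) x) atTop := by
  have hρI : Integrable ρ := by
    by_contra hcon
    rw [integral_undef hcon] at hρ_int
    exact zero_ne_one hρ_int
  obtain ⟨C, hC⟩ := aux_unif n hn A' hA'_bdd g hg_nonneg hg_int hg_supp hg_equi
  obtain ⟨R, hR0, hR⟩ : ∃ R : ℝ, 0 < R ∧ ∀ x, ρ x ≠ 0 → ‖x‖ ≤ R := by
    obtain ⟨R, hR⟩ := hρ_supp.isCompact.isBounded.exists_norm_le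
    exact ⟨max R 1, by positivity, fun x hx =>
      (hR x (subset_tsupport _ hx)).trans (le_max_left _ _)⟩
  set E : ℕ → Set (Fin n → ℝ) := fun j => A ∩ Metric.cthickening (R * δ j) Aᶜ with hEdef
  have hEm : ∀ j, MeasurableSet (E j) := fun j =>
    hA_open.measurableSet.inter Metric.isClosed_cthickening.measurableSet
  have hb : ∀ j, 0 ≤ ∫ x in A, mollify n ρ (δ j) (g j) x ∧
      ∫ x in A, mollify n ρ (δ j) (g j) x ≤ ∫ y, g j y ∧
      ∫ y in A, g j y ≤ (∫ x in A, mollify n ρ (δ j) (g j) x) + ∫ y in E j, g j y := by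
    intro j
    have hd := hδ_pos j
    obtain ⟨k1, k2⟩ := aux_kernel n ρ hρI hρ_int (δ j) hd
    refine aux_bounds n (fun x => (δ j ^ n)⁻¹ * ρ ((δ j)⁻¹ • x)) (g j)
      (fun x => mul_nonneg (by positivity) (hρ_nonneg _)) k1 k2 (hg_nonneg j) (hg_int j)
      A (E j) hA_open.measurableSet (hEm j) ?_
    rintro y ⟨hyA, hyE⟩ x hx
    by_contra hne
    apply hyE
    refine ⟨hyA, Metric.mem_cthickening_of_dist_le y x _ _ hx ?_⟩
    have := hR _ (right_ne_zero_of_mul hne)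
    rw [norm_smul, norm_inv, Real.norm_of_nonneg hd.le, inv_mul_le_iff₀ hd] at this
    rw [dist_comm, dist_eq_norm]
    linarith
  have hE0 : Tendsto (fun j => volume (E j)) atTop (𝓝 0) := by
    have hfin : volume A ≠ ⊤ := ((measure_mono subset_closure).trans_lt hA_cpt.measure_lt_top).ne
    have : Fact (volume A < ⊤) := ⟨hfin.lt_top⟩
    have h1 := tendsto_measure_cthickening_of_isClosed (μ := volume.restrict A) (s := Aᶜ)
      ⟨1, one_pos, measure_ne_top _ _⟩ hA_open.isClosed_compl
    rw [Measure.restrict_apply hA_open.measurableSet.compl, Set.compl_inter_self,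
      measure_empty] at h1
    have h2 : Tendsto (fun j => R * δ j) atTop (𝓝 0) := by simpa using hδ_lim.const_mul R
    refine (h1.comp h2).congr fun j => ?_
    simp only [Function.comp, hEdef]
    rw [Measure.restrict_apply Metric.isClosed_cthickening.measurableSet, Set.inter_comm]
  have ha0 : ∀ j, 0 ≤ ∫ x in A, g j x := fun j => integral_nonneg fun x => hg_nonneg j x
  have haC : ∀ j, ∫ x in A, g j x ≤ C := fun j =>
    (setIntegral_le_integral (hg_int j) (Eventually.of_forall fun x => hg_nonneg j x)).trans (hC j)
  refine le_of_forall_pos_le_add fun ε hε => ?_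
  obtain ⟨η, hη, h⟩ := hg_equi ε hε
  have hev : ∀ᶠ j in atTop, ∫ x in A, g j x ≤ (∫ x in A, mollify n ρ (δ j) (g j) x) + ε := by
    filter_upwards [hE0.eventually_lt_const (ENNReal.ofReal_pos.2 hη)] with j hj
    have := h j (E j) (hEm j) hj.le
    linarith [(hb j).2.2]
  have hcob : IsCoboundedUnder (· ≥ ·) atTop (fun j => ∫ x in A, mollify n ρ (δ j) (g j) x) :=
    (isBoundedUnder_of ⟨C, fun j => (hb j).2.1.trans (hC j)⟩ :
      IsBoundedUnder (· ≤ ·) atTop _).isCoboundedUnder_ge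
  have hbdd : IsBoundedUnder (· ≥ ·) atTop (fun j => ∫ x in A, g j x) :=
    isBoundedUnder_of ⟨0, fun j => ha0 j⟩
  rw [← sub_le_iff_le_add]
  have hacob : IsCoboundedUnder (· ≥ ·) atTop (fun j => ∫ x in A, g j x) :=
    (isBoundedUnder_of ⟨C, haC⟩ : IsBoundedUnder (· ≤ ·) atTop _).isCoboundedUnder_ge
  refine le_of_forall_lt fun c hc => ?_
  obtain ⟨c', hc1, hc2⟩ := exists_between hc
  refine hc1.trans_le (le_liminf_of_le hcob ?_)
  filter_upwards [hev, eventually_lt_of_lt_liminf (lt_sub_iff_add_lt.1 hc2) hbdd] with j h1 h2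
  linarith
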